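/- Let φ := (1+√5)/2, α := (3 + √5 + √(6(5+√5)))/4, β := (2 + √5 + √(3(5+2√5)))/2, and let Θ be the 3×3 real skew-symmetric matrix with rows (0, φ, α), (−φ, 0, β), (−α, −β, 0). Then Θ is non-degenerate: for every x ∈ ℚ³, if ⟨x, Θy⟩ ∈ ℚ for all y ∈ ℚ³, then x = 0. -/

import Mathlib

theorem E8_no_sq5 (r : ℚ) : r ^ 2 ≠ 5 := by
  intro h
  have hI : Irrational (Real.sqrt 5) := Nat.Prime.irrational_sqrt (p := 5) (by norm_num)
  apply hI
  refine ⟨|r|, ?_⟩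
  have h2 : (5 : ℝ) = (r : ℝ) ^ 2 := by exact_mod_cast h.symm
  rw [h2, Real.sqrt_sq_eq_abs]
  push_cast
  rfl

theorem E8_lin5 (p q : ℚ) (h : (p : ℝ) + q * Real.sqrt 5 = 0) : p = 0 ∧ q = 0 := by
  have hs : Real.sqrt 5 ^ 2 = 5 := Real.sq_sqrt (by norm_num)
  have hq : q = 0 := by
    by_contra hq
    apply E8_no_sq5 (p / q)
    have h1 : (p : ℝ) ^ 2 = 5 * (q : ℝ) ^ 2 := by
      have : (p : ℝ) = - (q * Real.sqrt 5) := by linarith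
      rw [this]
      linear_combination (q : ℝ) ^ 2 * hs
    have h2 : p ^ 2 = 5 * q ^ 2 := by exact_mod_cast h1
    rw [div_pow, h2]
    field_simp
  subst hq
  refine ⟨?_, rfl⟩
  have : (p : ℝ) = 0 := by simpa using h
  exact_mod_cast this

theorem E8_no_sqrt (p q : ℚ) :
    Real.sqrt (6 * (5 + Real.sqrt 5)) ≠ p + q * Real.sqrt 5 := by
  intro h
  have hs : Real.sqrt 5 ^ 2 = 5 := Real.sq_sqrt (by norm_num)
  have ht : Real.sqrt (6 * (5 + Real.sqrt 5)) ^ 2 = 6 * (5 + Real.sqrt 5) :=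
    Real.sq_sqrt (by positivity)
  rw [h] at ht
  obtain ⟨h1, h2⟩ := E8_lin5 (p ^ 2 + 5 * q ^ 2 - 30) (2 * p * q - 6) (by
    push_cast
    linear_combination ht - (q : ℝ) ^ 2 * hs)
  apply E8_no_sq5 ((p ^ 2 - 5 * q ^ 2) / 12)
  linear_combination (p ^ 2 + 5 * q ^ 2 + 30) / 144 * h1 - 5 * (2 * p * q + 6) / 144 * h2

/-- With `φ = (1+√5)/2`, `α = (3 + √5 + √(6(5+√5)))/4` and
`β = (2 + √5 + √(3(5+2√5)))/2`, the 3×3 skew-symmetric matrix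
`Θ = !![0, φ, α; -φ, 0, β; -α, -β, 0]` is non-degenerate: any `x ∈ ℚ³` with
`⟨x, Θy⟩ ∈ ℚ` for all `y ∈ ℚ³` must be `0`. -/
theorem theta_E8_nondegenerate
    (φ α β : ℝ)
    (hφ : φ = (1 + Real.sqrt 5) / 2)
    (hα : α = (3 + Real.sqrt 5 + Real.sqrt (6 * (5 + Real.sqrt 5))) / 4)
    (hβ : β = (2 + Real.sqrt 5 + Real.sqrt (3 * (5 + 2 * Real.sqrt 5))) / 2)
    (Θ : Matrix (Fin 3) (Fin 3) ℝ) (hΘ : Θ = !![0, φ, α; -φ, 0, β; -α, -β, 0]) :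
    ∀ x : Fin 3 → ℚ,
      (∀ y : Fin 3 → ℚ, ∃ q : ℚ,
        ∑ i, (x i : ℝ) * Θ.mulVec (fun j => (y j : ℝ)) i = (q : ℝ)) → x = 0 := by
  intro x hx
  obtain ⟨r, hr⟩ := hx ![1, 0, 0]
  obtain ⟨s, hs⟩ := hx ![0, 1, 0]
  subst hΘ
  simp [Fin.sum_univ_three, Matrix.mulVec, dotProduct] at hr hs
  have hc : x 2 = 0 := by
    by_contra hc
    have hc' : (x 2 : ℝ) ≠ 0 := by exact_mod_cast hc
    apply E8_no_sqrt (-3 - (4 * r + 2 * x 1) / x 2) (-1 - 2 * x 1 / x 2)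
    push_cast
    field_simp
    rw [hφ, hα] at hr
    linear_combination (-4) * hr
  rw [hc] at hr hs
  have hb := E8_lin5 (x 1 / 2 + r) (x 1 / 2) (by
    push_cast
    rw [hφ] at hr
    simp at hr
    linear_combination (-1) * hr)
  have ha := E8_lin5 (x 0 / 2 - s) (x 0 / 2) (by
    push_cast
    rw [hφ] at hs
    simp at hs
    linear_combination hs)
  funext i
  fin_cases i
  · simpa using ha.2
  · simpa using hb.2
  · simpa using hc
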